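/- The number of rooted quadrangulations of the sphere with n faces equals (2/(n+2)) · (3^n/(n+1)) · C(2n,n). -/

import Mathlib

/-- The number of orbits (cycles, including fixed points) of a permutation. -/
noncomputable def permOrbits {D : Type*} [Fintype D] (f : Equiv.Perm D) : ℕ :=
  Nat.card (Quotient (MulAction.orbitRel (Subgroup.zpowers f) D))

/-- A rooted quadrangulation of the sphere with `n` faces, encoded as a rooted
combinatorial map on `4n` darts: `σ` rotates darts around their vertex, `α` is
the fixed-point-free edge involution, `σ * α` rotates darts around faces; the
map is connected, satisfies Euler's planarity relation `v + f = e + 2`, and all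
faces have degree `4`. -/
structure Quadrangulation (n : ℕ) where
  σ : Equiv.Perm (Fin (4 * n))
  α : Equiv.Perm (Fin (4 * n))
  root : Fin (4 * n)
  hinv : ∀ d, α (α d) = d
  hfix : ∀ d, α d ≠ d
  hconn : ∀ d : Fin (4 * n),
    d ∈ MulAction.orbit ((Subgroup.closure {σ, α}) : Subgroup (Equiv.Perm (Fin (4 * n)))) root
  heuler : permOrbits σ + permOrbits (σ * α) = permOrbits α + 2
  hquad : ∀ d : Fin (4 * n),
    Nat.card (MulAction.orbit (Subgroup.zpowers (σ * α)) d) = 4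

/-- Isomorphism of rooted maps: a relabelling of darts conjugating `σ` and `α`
and preserving the root. -/
def QuadIso {n : ℕ} (Q Q' : Quadrangulation n) : Prop :=
  ∃ ρ : Fin (4 * n) ≃ Fin (4 * n),
    (∀ d, ρ (Q.σ d) = Q'.σ (ρ d)) ∧ (∀ d, ρ (Q.α d) = Q'.α (ρ d)) ∧ ρ Q.root = Q'.root

/-!
Record a map by its face permutation `φ` and its edge involution `α`, so that `φ * α` rotates
darts around the vertices. For fixed `φ`, planar maps are counted by Tutte's root deletion: if the
edge of a dart `r` is `{r, s}`, replacing `φ` by `φ * swap r s` and `α` by `swap r s * α` deletes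
this edge and leaves the vertex permutation unchanged. The deletion cuts the face of `r` in two when
it also contains `s`, and merges the faces of `r` and `s` otherwise. To iterate this, one allows
disconnected maps in which every component contains a marked face; Euler's inequality shows that in
the planar case each component contains exactly one. The count for several marked faces is then a
coefficient of a product of series `B l`, one for each marked face of degree `l`, which are the
solution of `B (l + 1) = ∑ B i * B (l - 1 - i) + X * B (l + 3)`.

The solution is explicit in terms of `T = ∑ 3 ^ n * catalan n * X ^ n`, the solution of
`T = 1 + 3 * X * T ^ 2`. Finally, a rooted map has no nontrivial automorphisms, so each isomorphism
class of quadrangulations with `n` faces has `(4 * n)!` labellings.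
-/

/-! ### Tutte's recursion for quadrangulations of the disk -/

section Series

open PowerSeries Finset

/-- Tutte's recursion for the generating functions `B l` of planar maps with a boundary face of
degree `l` and inner faces of degree `k + 1`, counted by the number of inner faces. Removing the
root edge of a boundary of length `m + 1` either cuts the map into two maps whose boundary lengths
`i` and `m - 1 - i` add up to `m - 1`, or opens an inner face. -/
structure TutteRecursion {R : Type*} [CommSemiring R] (k : ℕ) (B : ℕ → R⟦X⟧) : Prop where
  zero : B 0 = 1
  succ (m : ℕ) : B (m + 1) = ∑ i ∈ range m, B i * B (m - 1 - i) + X * B (m + k)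

/-- The generating function `∑ 3 ^ n * catalan n * X ^ n`, in which the generating functions of
quadrangulations with a boundary are rational. -/
noncomputable def treeSeries : ℚ⟦X⟧ := mk fun n ↦ 3 ^ n * catalan n

theorem treeSeries_eq : treeSeries = 1 + 3 * (X * treeSeries ^ 2) := by
  have rescale_catalan : treeSeries = rescale 3 (map (Nat.castRingHom ℚ) catalanSeries) := by
    ext n
    simp [treeSeries, coeff_rescale]
  have h := congrArg (fun f ↦ rescale (3 : ℚ) (map (Nat.castRingHom ℚ) f))
    catalanSeries_sq_mul_X_add_one
  simp only [map_add, map_mul, map_pow, map_one, map_X, rescale_X, ← rescale_catalan] at h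
  rw [show (3 : ℚ⟦X⟧) = C 3 from rfl]
  linear_combination -h

/-- The generating function of quadrangulations with a boundary of length `2 * p`. -/
noncomputable def evenDiskSeries (p : ℕ) : ℚ⟦X⟧ :=
  treeSeries ^ (p + 1) *
    ((1 - 2 * (X * treeSeries)) * (catalan p : ℚ⟦X⟧) - X * treeSeries * (catalan (p + 1) : ℚ⟦X⟧))

theorem evenDiskSeries_zero : evenDiskSeries 0 = 1 := by
  simp only [evenDiskSeries, catalan_zero, zero_add, catalan_one, Nat.cast_one]
  linear_combination treeSeries_eq

theorem sum_catalan_mul_catalan (R : Type*) [CommSemiring R] (p : ℕ) :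
    ∑ x ∈ antidiagonal p, (catalan x.1 : R) * catalan x.2 = catalan (p + 1) := by
  rw [catalan_succ', Nat.cast_sum]
  simp only [Nat.cast_mul]

theorem sum_catalan_mul_catalan_succ (R : Type*) [CommRing R] (p : ℕ) :
    ∑ x ∈ antidiagonal p, (catalan x.1 : R) * catalan (x.2 + 1) =
      catalan (p + 2) - catalan (p + 1) := by
  have h := sum_catalan_mul_catalan R (p + 1)
  simp only [Nat.sum_antidiagonal_succ', catalan_zero, Nat.cast_one, mul_one] at h
  linear_combination h

theorem sum_catalan_succ_mul_catalan (R : Type*) [CommRing R] (p : ℕ) :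
    ∑ x ∈ antidiagonal p, (catalan (x.1 + 1) : R) * catalan x.2 =
      catalan (p + 2) - catalan (p + 1) := by
  have h := sum_catalan_mul_catalan R (p + 1)
  simp only [Nat.sum_antidiagonal_succ, catalan_zero, Nat.cast_one, one_mul] at h
  linear_combination h

theorem sum_catalan_succ_mul_catalan_succ (R : Type*) [CommRing R] (p : ℕ) :
    ∑ x ∈ antidiagonal p, (catalan (x.1 + 1) : R) * catalan (x.2 + 1) =
      catalan (p + 3) - 2 * catalan (p + 2) := by
  have h := sum_catalan_mul_catalan_succ R (p + 1)
  simp only [Nat.sum_antidiagonal_succ, catalan_zero, Nat.cast_one, one_mul] at h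
  linear_combination h

theorem evenDiskSeries_succ (p : ℕ) :
    evenDiskSeries (p + 1) =
      ∑ x ∈ antidiagonal p, evenDiskSeries x.1 * evenDiskSeries x.2 +
        X * evenDiskSeries (p + 2) := by
  have expand : ∑ x ∈ antidiagonal p, evenDiskSeries x.1 * evenDiskSeries x.2 =
      treeSeries ^ (p + 2) *
        ((1 - 2 * (X * treeSeries)) ^ 2 *
            ∑ x ∈ antidiagonal p, (catalan x.1 : ℚ⟦X⟧) * catalan x.2 -
          (1 - 2 * (X * treeSeries)) * (X * treeSeries) *
            ∑ x ∈ antidiagonal p, (catalan x.1 : ℚ⟦X⟧) * catalan (x.2 + 1) -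
          (1 - 2 * (X * treeSeries)) * (X * treeSeries) *
            ∑ x ∈ antidiagonal p, (catalan (x.1 + 1) : ℚ⟦X⟧) * catalan x.2 +
          (X * treeSeries) ^ 2 *
            ∑ x ∈ antidiagonal p, (catalan (x.1 + 1) : ℚ⟦X⟧) * catalan (x.2 + 1)) := by
    simp only [mul_sum, ← sum_sub_distrib, ← sum_add_distrib]
    refine sum_congr rfl fun x hx ↦ ?_
    rw [← mem_antidiagonal.mp hx]
    simp only [evenDiskSeries]
    ring
  rw [expand, sum_catalan_mul_catalan, sum_catalan_mul_catalan_succ,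
    sum_catalan_succ_mul_catalan, sum_catalan_succ_mul_catalan_succ]
  simp only [evenDiskSeries]
  ring

/-- The generating function of quadrangulations with a boundary of length `l`. It vanishes for odd
`l`, quadrangulations of the disk being bipartite. -/
noncomputable def diskSeries (l : ℕ) : ℚ⟦X⟧ := if Even l then evenDiskSeries (l / 2) else 0

theorem diskSeries_two_mul (p : ℕ) : diskSeries (2 * p) = evenDiskSeries p := by
  simp [diskSeries]

theorem diskSeries_of_odd {l : ℕ} (hl : Odd l) : diskSeries l = 0 :=
  if_neg (Nat.not_even_iff_odd.mpr hl)

theorem sum_range_eq_sum_range_two_mul {M : Type*} [AddCommMonoid M] {f : ℕ → M}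
    (hf : ∀ i, Odd i → f i = 0) (p : ℕ) :
    ∑ i ∈ range (2 * p + 1), f i = ∑ i ∈ range (p + 1), f (2 * i) := by
  induction p with
  | zero => simp
  | succ p ih =>
    rw [mul_add, mul_one, sum_range_succ, sum_range_succ, ih, hf _ (odd_two_mul_add_one p),
      add_zero, sum_range_succ _ (p + 1), mul_add, mul_one]

theorem tutteRecursion_diskSeries : TutteRecursion 3 diskSeries where
  zero := by simpa [evenDiskSeries_zero] using diskSeries_two_mul 0
  succ m := by
    rcases Nat.even_or_odd' m with ⟨p, rfl | rfl⟩
    · rw [diskSeries_of_odd ⟨p, rfl⟩, diskSeries_of_odd (l := 2 * p + 3) ⟨p + 1, by ring⟩,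
        mul_zero, add_zero, sum_eq_zero]
      intro i hi
      rw [mem_range] at hi
      rcases Nat.even_or_odd' i with ⟨j, rfl | rfl⟩
      · rw [diskSeries_of_odd (l := 2 * p - 1 - 2 * j) ⟨p - 1 - j, by omega⟩, mul_zero]
      · rw [diskSeries_of_odd ⟨j, rfl⟩, zero_mul]
    · rw [sum_range_eq_sum_range_two_mul fun i hi ↦ by rw [diskSeries_of_odd hi, zero_mul]]
      have half_sub (i : ℕ) : 2 * p + 1 - 1 - 2 * i = 2 * (p - i) := by omega
      rw [show 2 * p + 1 + 1 = 2 * (p + 1) by ring, show 2 * p + 1 + 3 = 2 * (p + 2) by ring]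
      simp only [half_sub, diskSeries_two_mul]
      rw [evenDiskSeries_succ, Nat.sum_antidiagonal_eq_sum_range_succ_mk]

theorem nine_mul_X_sq_mul_evenDiskSeries_two :
    9 * (X ^ 2 * evenDiskSeries 2) = 12 * (X * treeSeries) - treeSeries + 1 - 9 * X := by
  have hone : 9 * (X * evenDiskSeries 1) = 12 * (X * treeSeries) - treeSeries + 1 := by
    simp only [evenDiskSeries, Nat.reduceAdd, catalan_one, catalan_two]
    push_cast
    linear_combination (1 + 12 * X * treeSeries) * treeSeries_eq
  have hrec := evenDiskSeries_succ 0
  simp only [zero_add, Nat.antidiagonal_zero, sum_singleton, evenDiskSeries_zero, mul_one] at hrec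
  linear_combination hone - 9 * X * hrec

theorem add_three_mul_catalan_add_two (n : ℕ) :
    (n + 3) * catalan (n + 2) = 2 * (2 * n + 3) * catalan (n + 1) := by
  refine Nat.eq_of_mul_eq_mul_left (Nat.succ_pos (n + 1)) ?_
  have h₁ := succ_mul_catalan_eq_centralBinom (n + 1)
  have h₂ := succ_mul_catalan_eq_centralBinom (n + 2)
  have h₃ := Nat.succ_mul_centralBinom_succ (n + 1)
  rw [← h₁, ← h₂] at h₃
  linarith

theorem coeff_diskSeries_four (n : ℕ) :
    ((n : ℚ) + 3) * ((n + 2) * coeff n (diskSeries 4)) =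
      2 * (3 ^ (n + 1) * (2 * (n + 1)).choose (n + 1)) := by
  have hcoeff : 9 * coeff n (diskSeries 4) =
      12 * (3 ^ (n + 1) * catalan (n + 1)) - 3 ^ (n + 2) * catalan (n + 2) := by
    have h := congrArg (coeff (n + 2)) nine_mul_X_sq_mul_evenDiskSeries_two
    rw [show (9 : ℚ⟦X⟧) = C 9 from rfl, show (12 : ℚ⟦X⟧) = C 12 from rfl] at h
    simpa [← diskSeries_two_mul, coeff_X_pow_mul, coeff_X, coeff_one, coeff_succ_X_mul,
      treeSeries] using h
  have hratio : ((n : ℚ) + 3) * catalan (n + 2) = 2 * (2 * n + 3) * catalan (n + 1) := by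
    exact_mod_cast add_three_mul_catalan_add_two n
  have hcatalan : ((n : ℚ) + 2) * catalan (n + 1) = (2 * (n + 1)).choose (n + 1) := by
    exact_mod_cast (succ_mul_catalan_eq_centralBinom (n + 1)).trans
      (Nat.centralBinom_eq_two_mul_choose _)
  rw [← hcatalan]
  linear_combination ((n : ℚ) + 3) * (n + 2) / 9 * hcoeff - (3 : ℚ) ^ n * (n + 2) * hratio

end Series

/-! ### Cycle decompositions -/

section CycleDecomposition

open Equiv

variable {D : Type*}

theorem mem_orbit_zpowers_iff_sameCycle {φ : Perm D} {x y : D} :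
    x ∈ MulAction.orbit (Subgroup.zpowers φ) y ↔ φ.SameCycle y x := by
  simp [MulAction.mem_orbit_iff, Subgroup.smul_def, Perm.SameCycle]

theorem permOrbits_eq_card_quotient_sameCycle [Fintype D] (φ : Perm D) :
    permOrbits φ = Nat.card (Quotient (Perm.SameCycle.setoid φ)) :=
  Nat.card_congr <| Quotient.congrRight fun x y ↦ by
    rw [MulAction.orbitRel_apply, mem_orbit_zpowers_iff_sameCycle, Perm.sameCycle_comm]
    rfl

/-- The letters of a multiset of cyclic words, with multiplicity. -/
def letters (L : Multiset (Cycle D)) : Multiset D := L.bind Cycle.toMultiset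

@[simp]
theorem letters_zero : letters (0 : Multiset (Cycle D)) = 0 := Multiset.zero_bind _

@[simp]
theorem letters_cons (c : Cycle D) (L : Multiset (Cycle D)) :
    letters (c ::ₘ L) = c.toMultiset + letters L := Multiset.cons_bind ..

@[simp]
theorem letters_add (L U : Multiset (Cycle D)) : letters (L + U) = letters L + letters U :=
  Multiset.add_bind ..

@[simp]
theorem mem_toMultiset_iff {c : Cycle D} {x : D} : x ∈ c.toMultiset ↔ x ∈ c := by
  induction c using Quotient.inductionOn
  rfl

theorem mem_letters_iff {L : Multiset (Cycle D)} {x : D} : x ∈ letters L ↔ ∃ c ∈ L, x ∈ c := by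
  simp [letters]

theorem exists_eq_coe_cons_of_mem {c : Cycle D} {x : D} (hx : x ∈ c) :
    ∃ a : List D, c = ↑(x :: a) := by
  induction c using Quotient.inductionOn with | h w
  obtain ⟨u, v, rfl⟩ := List.append_of_mem (Cycle.mem_coe_iff.mp hx)
  exact ⟨v ++ u, Quotient.sound (List.isRotated_append (l := u) (l' := x :: v))⟩

theorem exists_eq_cons_of_mem_letters {L : Multiset (Cycle D)} {x : D} (hx : x ∈ letters L) :
    ∃ (a : List D) (L' : Multiset (Cycle D)), L = ↑(x :: a) ::ₘ L' := by
  obtain ⟨c, hc, hxc⟩ := mem_letters_iff.mp hx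
  obtain ⟨L', rfl⟩ := Multiset.exists_cons_of_mem hc
  obtain ⟨a, rfl⟩ := exists_eq_coe_cons_of_mem hxc
  exact ⟨a, L', rfl⟩

/-- The cyclic words in `L` are the orbits of `φ`, each written as `x, φ x, φ (φ x), …`. -/
structure IsCycleDecomposition (φ : Perm D) (L : Multiset (Cycle D)) : Prop where
  ne_nil : ∀ c ∈ L, c ≠ Cycle.nil
  chain : ∀ c ∈ L, c.Chain fun x y ↦ φ x = y
  nodup : (letters L).Nodup
  mem_letters : ∀ x, x ∈ letters L

namespace IsCycleDecomposition

variable {φ : Perm D} {L U : Multiset (Cycle D)} {c : Cycle D} {x y : D}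

theorem pairwise_disjoint (h : IsCycleDecomposition φ L) :
    L.Pairwise (Function.onFun Disjoint Cycle.toMultiset) :=
  (Multiset.nodup_bind.mp h.nodup).2

theorem eq_of_mem_of_mem {c' : Cycle D} (h : IsCycleDecomposition φ L) (hc : c ∈ L) (hc' : c' ∈ L)
    (hx : x ∈ c) (hx' : x ∈ c') : c = c' := by
  by_contra hne
  have : Std.Symm (Function.onFun Disjoint (Cycle.toMultiset (α := D))) :=
    ⟨fun _ _ h ↦ Disjoint.symm h⟩
  have hdisj := h.pairwise_disjoint.forall hc hc' hne
  exact Multiset.disjoint_left.mp hdisj (mem_toMultiset_iff.mpr hx) (mem_toMultiset_iff.mpr hx')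

theorem nodup_words (h : IsCycleDecomposition φ L) : L.Nodup := by
  refine Multiset.nodup_iff_le.mpr fun c hle ↦ ?_
  obtain ⟨L', rfl⟩ := Multiset.le_iff_exists_add.mp hle
  have hnil := h.ne_nil c (by simp)
  have hdup := h.nodup
  simp [letters, Multiset.nodup_add, hnil] at hdup

theorem sameCycle (h : IsCycleDecomposition φ L) (hc : c ∈ L) (hx : x ∈ c) (hy : y ∈ c) :
    φ.SameCycle x y := by
  have : IsTrans D φ.SameCycle := ⟨fun _ _ _ ↦ Perm.SameCycle.trans⟩
  have hchain : c.Chain φ.SameCycle :=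
    (h.chain c hc).imp fun x y (hxy : φ x = y) ↦ hxy ▸ Perm.sameCycle_apply_right.mpr .rfl
  exact Cycle.chain_iff_pairwise.mp hchain x hx y hy

theorem apply_mem (h : IsCycleDecomposition φ L) (hc : c ∈ L) (hx : x ∈ c) : φ x ∈ c := by
  obtain ⟨a, rfl⟩ := exists_eq_coe_cons_of_mem hx
  have hchain := h.chain _ hc
  cases a with
  | nil => simp_all
  | cons y a =>
    rw [Cycle.chain_coe_cons, List.cons_append, List.isChain_cons_cons] at hchain
    simp [hchain.1]

theorem exists_mem (h : IsCycleDecomposition φ L) (hc : c ∈ L) : ∃ x, x ∈ c := by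
  induction c using Quotient.inductionOn with | h w
  exact List.exists_mem_of_ne_nil w fun hw ↦ h.ne_nil _ hc (by rw [hw]; rfl)

theorem apply_mem_letters_iff (h : IsCycleDecomposition φ (L + U)) :
    φ x ∈ letters L ↔ x ∈ letters L := by
  obtain ⟨c, hc, hxc⟩ := mem_letters_iff.mp (h.mem_letters x)
  have mem_iff {y : D} (hy : y ∈ c) : y ∈ letters L ↔ c ∈ L := by
    rw [mem_letters_iff]
    refine ⟨fun ⟨c', hc', hyc'⟩ ↦ ?_, fun hcL ↦ ⟨c, hcL, hy⟩⟩
    rwa [h.eq_of_mem_of_mem hc (Multiset.mem_add.mpr (Or.inl hc')) hy hyc']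
  rw [mem_iff hxc, mem_iff (h.apply_mem hc hxc)]

theorem mem_iff_sameCycle [Finite D] (h : IsCycleDecomposition φ L) (hc : c ∈ L) (hx : x ∈ c) :
    y ∈ c ↔ φ.SameCycle x y := by
  refine ⟨h.sameCycle hc hx, fun hxy ↦ ?_⟩
  obtain ⟨i, rfl⟩ := hxy.exists_nat_pow_eq
  have hmaps : Set.MapsTo φ {z | z ∈ c} {z | z ∈ c} := fun _ ↦ h.apply_mem hc
  exact hmaps.perm_pow i hx

theorem card_orbit_eq_length [Finite D] (h : IsCycleDecomposition φ L) (hc : c ∈ L) (hx : x ∈ c) :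
    Nat.card (MulAction.orbit (Subgroup.zpowers φ) x) = c.length := by
  classical
  have hnodup : c.toMultiset.Nodup := (Multiset.nodup_bind.mp h.nodup).1 c hc
  have horbit : MulAction.orbit (Subgroup.zpowers φ) x = c.toMultiset.toFinset := by
    ext y
    rw [mem_orbit_zpowers_iff_sameCycle, ← h.mem_iff_sameCycle hc hx, Finset.mem_coe,
      Multiset.mem_toFinset, mem_toMultiset_iff]
  rw [horbit, Nat.card_coe_set_eq, Set.ncard_coe_finset, Multiset.toFinset_card_of_nodup hnodup,
    Cycle.card_toMultiset]

theorem permOrbits_eq_card [Fintype D] (h : IsCycleDecomposition φ L) :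
    permOrbits φ = L.card := by
  classical
  choose word word_mem mem_word using fun x ↦ mem_letters_iff.mp (h.mem_letters x)
  let f (q : Quotient (Perm.SameCycle.setoid φ)) : L.toFinset :=
    ⟨word q.out, Multiset.mem_toFinset.mpr (word_mem _)⟩
  have hf : f.Bijective := by
    refine ⟨fun q q' hqq' ↦ ?_, fun ⟨c, hc⟩ ↦ ?_⟩
    · have hword : word q.out = word q'.out := congrArg Subtype.val hqq'
      rw [← q.out_eq, ← q'.out_eq]
      exact Quotient.sound (h.sameCycle (word_mem _) (mem_word q.out) (hword ▸ mem_word q'.out))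
    · rw [Multiset.mem_toFinset] at hc
      obtain ⟨x, hx⟩ := h.exists_mem hc
      have hout : φ.SameCycle x (⟦x⟧ : Quotient (Perm.SameCycle.setoid φ)).out :=
        (Quotient.mk_out (s := Perm.SameCycle.setoid φ) x).symm
      exact ⟨⟦x⟧, Subtype.ext (h.eq_of_mem_of_mem (word_mem _) hc (mem_word _)
        ((h.mem_iff_sameCycle hc hx).mpr hout))⟩
  rw [permOrbits_eq_card_quotient_sameCycle, Nat.card_eq_of_bijective f hf,
    Nat.card_eq_fintype_card, Fintype.card_coe, Multiset.toFinset_card_of_nodup h.nodup_words]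

end IsCycleDecomposition

theorem mem_periodicOrbit_iff_sameCycle [Finite D] (φ : Perm D) {x y : D} :
    y ∈ Function.periodicOrbit φ x ↔ φ.SameCycle x y := by
  rw [Function.mem_periodicOrbit_iff (φ.injective.mem_periodicPts x)]
  refine ⟨fun ⟨i, hi⟩ ↦ ⟨i, ?_⟩, fun hxy ↦ ?_⟩
  · rwa [zpow_natCast, Perm.coe_pow]
  · simpa only [Perm.coe_pow] using hxy.exists_nat_pow_eq

theorem exists_isCycleDecomposition [Finite D] (φ : Perm D) :
    ∃ L, IsCycleDecomposition φ L := by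
  have := Fintype.ofFinite (Quotient (Perm.SameCycle.setoid φ))
  let orbitOf (q : Quotient (Perm.SameCycle.setoid φ)) : Cycle D := Function.periodicOrbit φ q.out
  have mem_orbitOf (x : D) (q) : x ∈ orbitOf q ↔ ⟦x⟧ = q := by
    rw [mem_periodicOrbit_iff_sameCycle, Perm.sameCycle_comm, Quotient.mk_eq_iff_out]
    rfl
  have nodup_orbitOf (q) : (orbitOf q).toMultiset.Nodup := Function.nodup_periodicOrbit
  refine ⟨Finset.univ.val.map orbitOf, ?_, ?_, ?_, fun x ↦ ?_⟩
  · rintro _ hc rfl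
    obtain ⟨q, -, hq⟩ := Multiset.mem_map.mp hc
    have := (mem_orbitOf q.out q).mpr q.out_eq
    simp [hq] at this
  · rintro _ hc
    obtain ⟨q, -, rfl⟩ := Multiset.mem_map.mp hc
    exact (Function.periodicOrbit_chain _).mpr fun n _ ↦ (Function.iterate_succ_apply' ..).symm
  · rw [letters, Multiset.bind_map, Multiset.nodup_bind]
    refine ⟨fun q _ ↦ nodup_orbitOf q, Finset.univ.nodup.pairwise fun q _ q' _ hne ↦ ?_⟩
    refine Multiset.disjoint_left.mpr fun {x} hx hx' ↦ hne ?_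
    rw [mem_toMultiset_iff, mem_orbitOf] at hx hx'
    rw [← hx, hx']
  · exact mem_letters_iff.mpr ⟨orbitOf ⟦x⟧, Multiset.mem_map_of_mem _ (Finset.mem_univ_val _),
      (mem_orbitOf x _).mpr rfl⟩

section Swap

variable [DecidableEq D] {φ : Perm D} {L : Multiset (Cycle D)} {r s : D}

theorem isChain_mul_swap_iff {t : D} {a : List D} (hr : r ∉ a) (hs : s ∉ a) :
    (a ++ [t]).IsChain (fun x y ↦ (φ * swap r s) x = y) ↔
      (a ++ [t]).IsChain (fun x y ↦ φ x = y) := by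
  have hswap (x : D) (hx : x ∈ a) : swap r s x = x :=
    swap_apply_of_ne_of_ne (by rintro rfl; exact hr hx) (by rintro rfl; exact hs hx)
  induction a using List.twoStepInduction <;> simp_all [List.isChain_cons_cons]

theorem isChain_cons_mul_swap_iff {t : D} {a : List D} (hr : r ∉ a) (hs : s ∉ a) :
    (s :: (a ++ [t])).IsChain (fun x y ↦ (φ * swap r s) x = y) ↔
      (r :: (a ++ [t])).IsChain (fun x y ↦ φ x = y) := by
  cases a with
  | nil => simp
  | cons x a =>
    have htail := isChain_mul_swap_iff (φ := φ) (t := t) hr hs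
    simp_all [List.isChain_cons_cons]

theorem chain_mul_swap_iff {c : Cycle D} (hr : r ∉ c) (hs : s ∉ c) :
    (c.Chain fun x y ↦ (φ * swap r s) x = y) ↔ c.Chain fun x y ↦ φ x = y := by
  induction c using Cycle.induction_on with
  | nil => simp
  | cons x a => exact isChain_mul_swap_iff (a := x :: a) hr hs

theorem isCycleDecomposition_cut_iff {a b : List D} :
    IsCycleDecomposition φ (↑(r :: (a ++ s :: b)) ::ₘ L) ↔
      IsCycleDecomposition (φ * swap r s) (↑(s :: a) ::ₘ ↑(r :: b) ::ₘ L) := by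
  have hletters : letters (↑(r :: (a ++ s :: b)) ::ₘ L) =
      letters (↑(s :: a) ::ₘ ↑(r :: b) ::ₘ L) := by
    simp only [letters_cons, Cycle.coe_toMultiset, ← Multiset.cons_coe, ← Multiset.coe_add,
      Multiset.cons_add, Multiset.add_cons, Multiset.cons_swap r s, add_assoc]
  have hchain (hnodup : (letters (↑(r :: (a ++ s :: b)) ::ₘ L)).Nodup) :
      (∀ c ∈ (↑(r :: (a ++ s :: b)) ::ₘ L : Multiset (Cycle D)), c.Chain fun x y ↦ φ x = y) ↔
        ∀ c ∈ (↑(s :: a) ::ₘ ↑(r :: b) ::ₘ L : Multiset (Cycle D)),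
          c.Chain fun x y ↦ (φ * swap r s) x = y := by
    have ⟨hra, hrb, hrL, hsa, hsb, hsL⟩ : r ∉ a ∧ r ∉ b ∧ r ∉ letters L ∧
        s ∉ a ∧ s ∉ b ∧ s ∉ letters L := by
      simp only [letters_cons, Cycle.coe_toMultiset, Multiset.nodup_add, Multiset.coe_nodup,
        List.nodup_cons, List.nodup_append, Multiset.disjoint_left, Multiset.mem_coe] at hnodup
      grind
    have hL (c) (hc : c ∈ L) :
        (c.Chain fun x y ↦ φ x = y) ↔ c.Chain fun x y ↦ (φ * swap r s) x = y :=
      (chain_mul_swap_iff (fun h ↦ hrL (mem_letters_iff.mpr ⟨c, hc, h⟩))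
        (fun h ↦ hsL (mem_letters_iff.mpr ⟨c, hc, h⟩))).symm
    have hb := isChain_cons_mul_swap_iff (φ := φ) (t := r) hsb hrb
    rw [swap_comm] at hb
    simp only [Multiset.forall_mem_cons, Cycle.chain_coe_cons, List.cons_append, List.append_assoc]
    rw [List.isChain_cons_split, isChain_cons_mul_swap_iff hra hsa, hb, forall₂_congr hL, and_assoc]
  constructor <;> rintro ⟨hne, h, hnodup, hmem⟩
  · exact ⟨by simpa using hne, (hchain hnodup).mp h, hletters ▸ hnodup, hletters ▸ hmem⟩
  · rw [← hletters] at hnodup hmem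
    exact ⟨by simpa using hne, (hchain hnodup).mpr h, hnodup, hmem⟩

theorem IsCycleDecomposition.join {a b : List D}
    (h : IsCycleDecomposition φ (↑(r :: a) ::ₘ ↑(s :: b) ::ₘ L)) :
    IsCycleDecomposition (φ * swap r s) (↑(r :: (b ++ s :: a)) ::ₘ L) := by
  rw [isCycleDecomposition_cut_iff, mul_assoc, swap_mul_self, mul_one, Multiset.cons_swap]
  exact h

end Swap

end CycleDecomposition

/-! ### Gluings and Euler's inequality -/

section Gluing

open Equiv

variable {D : Type*}

/-- Every point is carried into `M` by the group generated by `φ` and `α`. For the permutations of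
a combinatorial map: every connected component meets `M`. -/
def Reaches (φ α : Perm D) (M : Set D) : Prop :=
  ∀ x, ∃ m ∈ M, x ∈ MulAction.orbit (Subgroup.closure {φ, α} : Subgroup (Perm D)) m

open Pointwise in
theorem reaches_iff {φ α : Perm D} {M : Set D} :
    Reaches φ α M ↔ ∀ X : Set D, M ⊆ X → φ ∈ MulAction.stabilizer (Perm D) X →
      α ∈ MulAction.stabilizer (Perm D) X → X = Set.univ := by
  refine ⟨fun h X hMX hφ hα ↦ Set.eq_univ_of_forall fun x ↦ ?_, fun h x ↦ ?_⟩
  · obtain ⟨m, hm, ⟨g, hg⟩, rfl⟩ := h x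
    have hle : Subgroup.closure {φ, α} ≤ MulAction.stabilizer (Perm D) X := by
      simp [Subgroup.closure_le, Set.insert_subset_iff, hφ, hα]
    exact (MulAction.mem_stabilizer_set.mp (hle hg) m).mpr (hMX hm)
  · let G : Subgroup (Perm D) := Subgroup.closure {φ, α}
    let X : Set D := {x | ∃ m ∈ M, x ∈ MulAction.orbit G m}
    have hG (g : Perm D) (hg : g ∈ G) : g ∈ MulAction.stabilizer (Perm D) X :=
      MulAction.mem_stabilizer_set.mpr fun x ↦ exists_congr fun m ↦ and_congr_right fun _ ↦ by
        rw [MulAction.mem_orbit_symm, MulAction.mem_orbit_symm (a₁ := x)]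
        exact (MulAction.orbit_smul (⟨g, hg⟩ : G) x).symm ▸ Iff.rfl
    have hX : X = Set.univ := h X (fun m hm ↦ ⟨m, hm, MulAction.mem_orbit_self m⟩)
      (hG φ (Subgroup.subset_closure (by simp))) (hG α (Subgroup.subset_closure (by simp)))
    exact hX.ge (Set.mem_univ x)

/-- `α` is an involution with set of moved points `S`. -/
structure IsInvolutionOn (S : Finset D) (α : Perm D) : Prop where
  involutive : Function.Involutive α
  mem_iff : ∀ x, x ∈ S ↔ α x ≠ x

variable {φ α : Perm D} {S : Finset D} {r s : D} {L L' U : Multiset (Cycle D)} {a b : List D}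

theorem IsInvolutionOn.apply_mem (h : IsInvolutionOn S α) (hr : r ∈ S) : α r ∈ S := by
  rw [h.mem_iff, h.involutive]
  exact ((h.mem_iff r).mp hr).symm

/-- `α` glues together the points of `S` in pairs in such a way that, in the map with faces the
orbits of `φ` and edges the orbits of `α`, every connected component contains one of the faces in
`L`. Points outside `S` belong to edges which have been removed. -/
structure IsGluing (φ : Perm D) (L : Multiset (Cycle D)) (S : Finset D) (α : Perm D) : Prop where
  involution : IsInvolutionOn S α
  reaches : Reaches φ α {x | x ∈ letters L}

theorem IsCycleDecomposition.reaches_singleton_iff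
    (hφ : IsCycleDecomposition φ (↑(r :: a) ::ₘ U)) :
    Reaches φ α {x | x ∈ letters {(↑(r :: a) : Cycle D)}} ↔
      ∀ x, x ∈ MulAction.orbit (Subgroup.closure {φ, α} : Subgroup (Perm D)) r := by
  let G : Subgroup (Perm D) := Subgroup.closure {φ, α}
  have hzpowers : Subgroup.zpowers φ ≤ G :=
    Subgroup.zpowers_le_of_mem (Subgroup.subset_closure (by simp))
  have hword {m : D} (hm : m ∈ (↑(r :: a) : Cycle D)) :
      MulAction.orbit G m = MulAction.orbit G r := by
    obtain ⟨i, rfl⟩ := hφ.sameCycle (Multiset.mem_cons_self _ U) (x := r) (by simp) hm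
    exact MulAction.orbit_smul (⟨φ ^ i, hzpowers (Subgroup.zpow_mem_zpowers φ i)⟩ : G) r
  refine forall_congr' fun x ↦ ⟨fun ⟨m, hm, hx⟩ ↦ ?_, fun hx ↦ ⟨r, by simp [letters], hx⟩⟩
  rw [Set.mem_ofPred_eq, mem_letters_iff] at hm
  obtain ⟨c, hc, hmc⟩ := hm
  rw [Multiset.mem_singleton.mp hc] at hmc
  exact hword hmc ▸ hx

open Pointwise in
theorem IsGluing.eq_zero_of_disjoint (h : IsGluing φ L S α) (hφ : IsCycleDecomposition φ (L + U))
    (hS : ∀ x ∈ letters L, x ∉ S) : U = 0 ∧ S = ∅ ∧ α = 1 := by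
  have hαfix {x : D} (hx : x ∈ letters L) : α x = x :=
    not_not.mp (mt (h.involution.mem_iff x).mpr (hS x hx))
  have hφL : φ ∈ MulAction.stabilizer (Perm D) {x | x ∈ letters L} :=
    MulAction.mem_stabilizer_set.mpr fun _ ↦ hφ.apply_mem_letters_iff
  have hαL : α ∈ MulAction.stabilizer (Perm D) {x | x ∈ letters L} := by
    refine MulAction.mem_stabilizer_set.mpr fun x ↦ ⟨fun hx ↦ ?_, fun hx ↦ ?_⟩
    · rwa [← α.injective (hαfix hx)]
    · rwa [Perm.smul_def, hαfix hx]
  have huniv (x : D) : x ∈ letters L :=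
    (reaches_iff.mp h.reaches _ subset_rfl hφL hαL).ge (Set.mem_univ x)
  refine ⟨Multiset.eq_zero_of_forall_notMem fun c hc ↦ ?_,
    Finset.eq_empty_of_forall_notMem fun x ↦ hS x (huniv x), Equiv.ext fun x ↦ hαfix (huniv x)⟩
  obtain ⟨x, hx⟩ : ∃ x, x ∈ c := hφ.exists_mem (by simp [hc])
  have hnodup := hφ.nodup
  rw [letters_add, Multiset.nodup_add] at hnodup
  exact Multiset.disjoint_left.mp hnodup.2.2 (huniv x) (mem_letters_iff.mpr ⟨c, hc, hx⟩)

section Deletion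

variable [DecidableEq D]

theorem isInvolutionOn_swap_mul_iff (hr : r ∈ S) (hs : s ∈ S) (hne : r ≠ s) :
    IsInvolutionOn S α ∧ α r = s ↔ IsInvolutionOn (S \ {r, s}) (swap r s * α) := by
  constructor
  · rintro ⟨⟨hinv, hmem⟩, hrs⟩
    have hsr : α s = r := hrs ▸ hinv r
    refine ⟨fun x ↦ ?_, fun x ↦ ?_⟩ <;>
    · have := hinv x
      simp only [Perm.mul_apply, swap_apply_def, Finset.mem_sdiff, Finset.mem_insert,
        Finset.mem_singleton]
      grind [α.injective.eq_iff]
  · rintro ⟨hinv, hmem⟩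
    have hrs : α r = s := (swap_apply_eq_iff.mp (not_not.mp (mt (hmem r).mpr (by simp)))).trans
      (swap_apply_left r s)
    have hsr : α s = r := (swap_apply_eq_iff.mp (not_not.mp (mt (hmem s).mpr (by simp)))).trans
      (swap_apply_right r s)
    refine ⟨⟨fun x ↦ ?_, fun x ↦ ?_⟩, hrs⟩
    · have := hinv x
      simp only [Perm.mul_apply, swap_apply_def] at this
      grind [α.injective.eq_iff]
    · have := hmem x
      simp only [Perm.mul_apply, swap_apply_def] at this
      grind [α.injective.eq_iff]

open Pointwise in
theorem swap_mem_stabilizer {X : Set D} (hr : r ∈ X) (hs : s ∈ X) :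
    swap r s ∈ MulAction.stabilizer (Perm D) X := by
  refine MulAction.mem_stabilizer_set.mpr fun x ↦ ?_
  rw [Perm.smul_def, swap_apply_def]
  split_ifs with hxr hxs <;> simp [*]

open Pointwise in
theorem reaches_mul_swap_iff {M W : Set D} (hr : r ∈ M) (hs : s ∈ M ∪ W)
    (hW : ∀ x ∈ W, φ.SameCycle s x) (hα : α r = s) :
    Reaches φ α M ↔ Reaches (φ * swap r s) (swap r s * α) (M ∪ W) := by
  simp only [reaches_iff]
  refine forall_congr' fun X ↦ ⟨fun h hMW hφ hα' ↦ ?_, fun h hM hφ hα' ↦ ?_⟩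
  · have hswap := swap_mem_stabilizer (hMW (Or.inl hr)) (hMW hs)
    exact h (Set.subset_union_left.trans hMW) ((Subgroup.mul_mem_cancel_right _ hswap).mp hφ)
      ((Subgroup.mul_mem_cancel_left _ hswap).mp hα')
  · have hsX : s ∈ X := hα ▸ (MulAction.mem_stabilizer_set.mp hα' r).mpr (hM hr)
    have hWX : W ⊆ X := fun x hx ↦ by
      obtain ⟨i, rfl⟩ := hW x hx
      exact (MulAction.mem_stabilizer_set.mp (zpow_mem hφ i) s).mpr hsX
    have hswap := swap_mem_stabilizer (hM hr) hsX
    exact h (Set.union_subset hM hWX) (mul_mem hφ hswap) (mul_mem hswap hα')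

theorem isGluing_mul_swap_iff {W : Set D} (hrS : r ∈ S) (hsS : s ∈ S) (hne : r ≠ s)
    (hr : r ∈ letters L) (hs : s ∈ letters L ∨ s ∈ W) (hW : ∀ x ∈ W, φ.SameCycle s x)
    (hL' : ∀ x, x ∈ letters L' ↔ x ∈ letters L ∨ x ∈ W) :
    IsGluing φ L S α ∧ α r = s ↔ IsGluing (φ * swap r s) L' (S \ {r, s}) (swap r s * α) := by
  have hset : {x | x ∈ letters L'} = {x | x ∈ letters L} ∪ W := Set.ext hL'
  have hreach (hα : α r = s) := reaches_mul_swap_iff (M := {x | x ∈ letters L}) hr hs hW hα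
  have hinv := isInvolutionOn_swap_mul_iff (α := α) hrS hsS hne
  constructor
  · rintro ⟨⟨hα, hc⟩, hrs⟩
    exact ⟨hinv.mp ⟨hα, hrs⟩, hset ▸ (hreach hrs).mp hc⟩
  · rintro ⟨hα, hc⟩
    obtain ⟨hα, hrs⟩ := hinv.mpr hα
    exact ⟨⟨hα, (hreach hrs).mpr (hset ▸ hc)⟩, hrs⟩

theorem isGluing_cut_iff (hrS : r ∈ S) (hsS : s ∈ S) (hne : r ≠ s) :
    IsGluing φ (↑(r :: (a ++ s :: b)) ::ₘ L) S α ∧ α r = s ↔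
      IsGluing (φ * swap r s) (↑(s :: a) ::ₘ ↑(r :: b) ::ₘ L) (S \ {r, s}) (swap r s * α) :=
  isGluing_mul_swap_iff (W := ∅) hrS hsS hne (by simp) (by simp) (by simp) fun x ↦ by
    simp only [letters_cons, Cycle.coe_toMultiset, Multiset.mem_add, Multiset.mem_coe,
      List.mem_cons, List.mem_append, Set.mem_empty_iff_false, or_false]
    tauto

theorem isGluing_join_marked_iff (hrS : r ∈ S) (hsS : s ∈ S) (hne : r ≠ s) :
    IsGluing φ (↑(r :: a) ::ₘ ↑(s :: b) ::ₘ L) S α ∧ α r = s ↔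
      IsGluing (φ * swap r s) (↑(r :: (b ++ s :: a)) ::ₘ L) (S \ {r, s}) (swap r s * α) :=
  isGluing_mul_swap_iff (W := ∅) hrS hsS hne (by simp) (by simp) (by simp) fun x ↦ by
    simp only [letters_cons, Cycle.coe_toMultiset, Multiset.mem_add, Multiset.mem_coe,
      List.mem_cons, List.mem_append, Set.mem_empty_iff_false, or_false]
    tauto

theorem isGluing_join_unmarked_iff (hφ : IsCycleDecomposition φ (↑(r :: a) ::ₘ L + ↑(s :: b) ::ₘ U))
    (hrS : r ∈ S) (hsS : s ∈ S) (hne : r ≠ s) :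
    IsGluing φ (↑(r :: a) ::ₘ L) S α ∧ α r = s ↔
      IsGluing (φ * swap r s) (↑(r :: (b ++ s :: a)) ::ₘ L) (S \ {r, s}) (swap r s * α) := by
  refine isGluing_mul_swap_iff (W := {x | x ∈ s :: b}) hrS hsS hne (by simp) (by simp)
    (fun x hx ↦ ?_) fun x ↦ ?_
  · exact hφ.sameCycle (c := ↑(s :: b)) (by simp) (by simp) hx
  · simp only [letters_cons, Cycle.coe_toMultiset, Multiset.mem_add, Multiset.mem_coe,
      List.mem_cons, List.mem_append, Set.mem_ofPred_eq]
    tauto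

theorem card_sdiff_pair_add_two (hr : r ∈ S) (hs : s ∈ S) (hne : r ≠ s) :
    (S \ {r, s}).card + 2 = S.card := by
  rw [← Finset.card_pair hne, Finset.card_sdiff_add_card_eq_card]
  exact Finset.insert_subset hr (Finset.singleton_subset_iff.mpr hs)

theorem sdiff_pair_ssubset (hr : r ∈ S) : S \ {r, s} ⊂ S :=
  Finset.ssubset_iff_subset_ne.mpr ⟨Finset.sdiff_subset, fun heq ↦ by
    rw [← heq] at hr
    simp at hr⟩

theorem mul_swap_mul_swap_mul (φ α : Perm D) (r s : D) : φ * swap r s * (swap r s * α) = φ * α := by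
  rw [mul_assoc, swap_mul_self_mul]

end Deletion

theorem IsGluing.two_mul_permOrbits_add_le [Fintype D] (h : IsGluing φ L S α)
    (hφ : IsCycleDecomposition φ (L + U)) :
    2 * permOrbits (φ * α) + 2 * U.card ≤ S.card + 2 * L.card := by
  classical
  induction S using Finset.strongInduction generalizing φ α L U with | H S ih
  by_cases hlive : ∀ x ∈ letters L, x ∉ S
  · obtain ⟨rfl, rfl, rfl⟩ := h.eq_zero_of_disjoint hφ hlive
    rw [add_zero] at hφ
    simp [hφ.permOrbits_eq_card]
  push Not at hlive
  obtain ⟨r, hrL, hrS⟩ := hlive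
  obtain ⟨a, L, rfl⟩ := exists_eq_cons_of_mem_letters hrL
  obtain ⟨s, hrs⟩ : ∃ s, α r = s := ⟨_, rfl⟩
  have hsS : s ∈ S := hrs ▸ h.involution.apply_mem hrS
  have hne : r ≠ s := hrs ▸ ((h.involution.mem_iff r).mp hrS).symm
  have hcard := card_sdiff_pair_add_two hrS hsS hne
  have ih {L' U' : Multiset (Cycle D)}
      (hg : IsGluing (φ * swap r s) L' (S \ {r, s}) (swap r s * α))
      (hd : IsCycleDecomposition (φ * swap r s) (L' + U')) :
      2 * permOrbits (φ * α) + 2 * U'.card ≤ (S \ {r, s}).card + 2 * L'.card :=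
    mul_swap_mul_swap_mul φ α r s ▸ ih _ (sdiff_pair_ssubset hrS) hg hd
  have hs : s ∈ a ∨ s ∈ letters L ∨ s ∈ letters U := by
    simpa [hne.symm, or_assoc] using hφ.mem_letters s
  rw [Multiset.cons_add] at hφ
  rcases hs with hs | hs | hs
  · obtain ⟨a, b, rfl⟩ := List.append_of_mem hs
    have := ih ((isGluing_cut_iff hrS hsS hne).mp ⟨h, hrs⟩) (U' := U)
      (by simpa only [Multiset.cons_add] using isCycleDecomposition_cut_iff.mp hφ)
    simp only [Multiset.card_cons] at this ⊢
    lia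
  · obtain ⟨b, L, rfl⟩ := exists_eq_cons_of_mem_letters hs
    rw [Multiset.cons_add] at hφ
    have := ih ((isGluing_join_marked_iff hrS hsS hne).mp ⟨h, hrs⟩) (U' := U)
      (by simpa only [Multiset.cons_add] using hφ.join)
    simp only [Multiset.card_cons] at this ⊢
    lia
  · obtain ⟨b, U, rfl⟩ := exists_eq_cons_of_mem_letters hs
    have hg := (isGluing_join_unmarked_iff (by rwa [Multiset.cons_add]) hrS hsS hne).mp ⟨h, hrs⟩
    rw [Multiset.add_cons] at hφ
    have := ih hg (U' := U) (by simpa only [Multiset.cons_add] using hφ.join)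
    simp only [Multiset.card_cons] at this ⊢
    lia

end Gluing

/-! ### Counting planar gluings -/

section Counting

open Equiv PowerSeries

variable {D : Type*} [Fintype D] {φ α : Perm D} {L U : Multiset (Cycle D)} {S : Finset D} {r s : D}
  {a b : List D} {u : ℕ}

/-- A gluing attaining equality in `IsGluing.two_mul_permOrbits_add_le`, where `u` is the number of
faces outside `L`: by Euler's formula, the map is planar and each of its connected components
contains exactly one of the faces in `L`. -/
structure IsPlanarGluing (φ : Perm D) (L : Multiset (Cycle D)) (u : ℕ) (S : Finset D)
    (α : Perm D) : Prop extends IsGluing φ L S α where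
  euler : 2 * permOrbits (φ * α) + 2 * u = S.card + 2 * L.card

/-- The number of planar gluings. -/
noncomputable def planarGluingCount (φ : Perm D) (L : Multiset (Cycle D)) (u : ℕ)
    (S : Finset D) : ℕ :=
  Nat.card {α // IsPlanarGluing φ L u S α}

/-- The number of planar gluings which glue `r` to `s`. -/
noncomputable def planarGluingCountAt (φ : Perm D) (L : Multiset (Cycle D)) (u : ℕ) (S : Finset D)
    (r s : D) : ℕ :=
  Nat.card {α // IsPlanarGluing φ L u S α ∧ α r = s}

theorem planarGluingCount_eq_sum (φ : Perm D) (L : Multiset (Cycle D)) (u : ℕ) (S : Finset D)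
    (r : D) : planarGluingCount φ L u S = ∑ s, planarGluingCountAt φ L u S r s := by
  have e := (Equiv.sigmaFiberEquiv fun α : {α // IsPlanarGluing φ L u S α} ↦ α.1 r).symm
  rw [planarGluingCount, Nat.card_congr e, Nat.card_sigma]
  exact Finset.sum_congr rfl fun s _ ↦
    Nat.card_congr (subtypeSubtypeEquivSubtypeInter _ fun α : Perm D ↦ α r = s)

theorem planarGluingCountAt_eq_zero (h : ∀ α, IsPlanarGluing φ L u S α → α r ≠ s) :
    planarGluingCountAt φ L u S r s = 0 :=
  Nat.card_eq_zero.mpr (.inl (Subtype.isEmpty_of_false fun α hα ↦ h α hα.1 hα.2))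

theorem planarGluingCountAt_of_notMem (hr : r ∈ S) (hs : s ∉ S) :
    planarGluingCountAt φ L u S r s = 0 :=
  planarGluingCountAt_eq_zero fun _ hα h ↦ hs (h ▸ hα.involution.apply_mem hr)

theorem planarGluingCount_of_disjoint (hφ : IsCycleDecomposition φ (L + U))
    (hS : ∀ x ∈ letters L, x ∉ S) :
    planarGluingCount φ L U.card S = if U.card = 0 then 1 else 0 := by
  split_ifs with hU
  · rw [Multiset.card_eq_zero] at hU
    subst hU
    rw [add_zero] at hφ
    obtain rfl : S = ∅ := Finset.eq_empty_of_forall_notMem fun x ↦ hS x (hφ.mem_letters x)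
    have hone : IsPlanarGluing φ L 0 ∅ 1 := by
      refine ⟨⟨⟨fun _ ↦ rfl, by simp⟩, fun x ↦ ?_⟩, by simp [hφ.permOrbits_eq_card]⟩
      exact ⟨x, hφ.mem_letters x, MulAction.mem_orbit_self x⟩
    refine Nat.card_eq_one_iff_exists.mpr ⟨⟨1, hone⟩, fun α ↦ Subtype.ext ?_⟩
    exact (α.2.eq_zero_of_disjoint (U := 0) (by rwa [add_zero]) hS).2.2
  · refine Nat.card_eq_zero.mpr (.inl (Subtype.isEmpty_of_false fun α hα ↦ hU ?_))
    rw [(hα.eq_zero_of_disjoint hφ hS).1, Multiset.card_zero]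

theorem IsCycleDecomposition.letters_eq_univ (hφ : IsCycleDecomposition φ L) :
    letters L = Finset.univ.val :=
  (Multiset.Nodup.ext hφ.nodup Finset.univ.nodup).mpr fun x ↦ by simp [hφ.mem_letters x]

theorem isPlanarGluing_iff : IsPlanarGluing φ L u S α ↔
    IsGluing φ L S α ∧ 2 * permOrbits (φ * α) + 2 * u = S.card + 2 * L.card :=
  ⟨fun h ↦ ⟨h.toIsGluing, h.euler⟩, fun h ↦ ⟨h.1, h.2⟩⟩

theorem IsPlanarGluing.apply_notMem_letters (h : IsPlanarGluing φ (↑(r :: a) ::ₘ L) U.card S α)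
    (hφ : IsCycleDecomposition φ (↑(r :: a) ::ₘ L + U)) (hrS : r ∈ S) : α r ∉ letters L := by
  classical
  intro hs
  have hne := ((h.involution.mem_iff r).mp hrS).symm
  have hsS := h.involution.apply_mem hrS
  obtain ⟨b, L, rfl⟩ := exists_eq_cons_of_mem_letters hs
  have hjoin := (isGluing_join_marked_iff hrS hsS hne).mp ⟨h.toIsGluing, rfl⟩
  rw [Multiset.cons_add, Multiset.cons_add] at hφ
  have hle := hjoin.two_mul_permOrbits_add_le (U := U)
    (by simpa only [Multiset.cons_add] using hφ.join)
  have heuler := h.euler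
  have hcard := card_sdiff_pair_add_two hrS hsS hne
  rw [mul_swap_mul_swap_mul] at hle
  simp only [Multiset.card_cons] at hle heuler
  lia

section Deletion

variable [DecidableEq D]

theorem isPlanarGluing_cut_iff (hrS : r ∈ S) (hsS : s ∈ S) (hne : r ≠ s) :
    IsPlanarGluing φ (↑(r :: (a ++ s :: b)) ::ₘ L) u S α ∧ α r = s ↔
      IsPlanarGluing (φ * swap r s) (↑(s :: a) ::ₘ ↑(r :: b) ::ₘ L) u (S \ {r, s})
        (swap r s * α) := by
  have hcard := card_sdiff_pair_add_two hrS hsS hne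
  simp only [isPlanarGluing_iff, ← isGluing_cut_iff hrS hsS hne, mul_swap_mul_swap_mul,
    Multiset.card_cons]
  grind

theorem isPlanarGluing_join_iff
    (hφ : IsCycleDecomposition φ (↑(r :: a) ::ₘ L + ↑(s :: b) ::ₘ U))
    (hrS : r ∈ S) (hsS : s ∈ S) (hne : r ≠ s) :
    IsPlanarGluing φ (↑(r :: a) ::ₘ L) (u + 1) S α ∧ α r = s ↔
      IsPlanarGluing (φ * swap r s) (↑(r :: (b ++ s :: a)) ::ₘ L) u (S \ {r, s})
        (swap r s * α) := by
  have hcard := card_sdiff_pair_add_two hrS hsS hne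
  simp only [isPlanarGluing_iff, ← isGluing_join_unmarked_iff hφ hrS hsS hne,
    mul_swap_mul_swap_mul, Multiset.card_cons]
  grind

theorem planarGluingCountAt_cut (hrS : r ∈ S) (hsS : s ∈ S) (hne : r ≠ s) :
    planarGluingCountAt φ (↑(r :: (a ++ s :: b)) ::ₘ L) u S r s =
      planarGluingCount (φ * swap r s) (↑(s :: a) ::ₘ ↑(r :: b) ::ₘ L) u (S \ {r, s}) :=
  Nat.card_congr <| (Equiv.mulLeft (swap r s)).subtypeEquiv fun _ ↦
    isPlanarGluing_cut_iff hrS hsS hne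

theorem planarGluingCountAt_join
    (hφ : IsCycleDecomposition φ (↑(r :: a) ::ₘ L + ↑(s :: b) ::ₘ U))
    (hrS : r ∈ S) (hsS : s ∈ S) (hne : r ≠ s) :
    planarGluingCountAt φ (↑(r :: a) ::ₘ L) (u + 1) S r s =
      planarGluingCount (φ * swap r s) (↑(r :: (b ++ s :: a)) ::ₘ L) u (S \ {r, s}) :=
  Nat.card_congr <| (Equiv.mulLeft (swap r s)).subtypeEquiv fun _ ↦
    isPlanarGluing_join_iff hφ hrS hsS hne

end Deletion

theorem planarGluingCount_eq_sum_add_sum (hφ : IsCycleDecomposition φ (↑(r :: a) ::ₘ L + U))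
    (hrS : r ∈ S) :
    planarGluingCount φ (↑(r :: a) ::ₘ L) U.card S =
      (a.map (planarGluingCountAt φ (↑(r :: a) ::ₘ L) U.card S r)).sum +
        ((letters U).map (planarGluingCountAt φ (↑(r :: a) ::ₘ L) U.card S r)).sum := by
  set f := planarGluingCountAt φ (↑(r :: a) ::ₘ L) U.card S r
  have hr : f r = 0 :=
    planarGluingCountAt_eq_zero fun α hα ↦ (hα.involution.mem_iff r).mp hrS
  have hL : ((letters L).map f).sum = 0 := by
    refine Multiset.sum_eq_zero fun y hy ↦ ?_
    obtain ⟨s, hs, rfl⟩ := Multiset.mem_map.mp hy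
    exact planarGluingCountAt_eq_zero fun α hα h ↦ hα.apply_notMem_letters hφ hrS (h ▸ hs)
  calc planarGluingCount φ (↑(r :: a) ::ₘ L) U.card S
    _ = ((letters (↑(r :: a) ::ₘ L + U)).map f).sum := by
      rw [hφ.letters_eq_univ, planarGluingCount_eq_sum _ _ _ _ r]
      rfl
    _ = (a.map f).sum + ((letters U).map f).sum := by simp [hr, hL]

end Counting

theorem sum_map_eq_sum_range_countP {D M : Type*} [AddCommMonoid M] {p : D → Prop}
    [DecidablePred p] {a : List D} {f : ℕ → ℕ → M} {h : D → M} (hnot : ∀ s ∈ a, ¬p s → h s = 0)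
    (hsplit : ∀ a₁ s a₂, a = a₁ ++ s :: a₂ → p s → h s = f (a₁.countP p) (a₂.countP p)) :
    (a.map h).sum = ∑ i ∈ Finset.range (a.countP p), f i (a.countP p - 1 - i) := by
  induction a generalizing f with
  | nil => simp
  | cons c a ih =>
    have hnot' : ∀ s ∈ a, ¬p s → h s = 0 := fun s hs ↦ hnot s (List.mem_cons_of_mem c hs)
    rw [List.map_cons, List.sum_cons]
    by_cases hc : p c
    · rw [hsplit [] c a rfl hc, ih (f := fun i j ↦ f (i + 1) j) hnot' fun a₁ s a₂ ha hs ↦ by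
        rw [hsplit (c :: a₁) s a₂ (by rw [ha, List.cons_append]) hs,
          List.countP_cons_of_pos (by simpa)], List.countP_cons_of_pos (by simpa),
        Finset.sum_range_succ', add_comm]
      simp [Nat.sub_add_eq, Nat.sub_right_comm]
    · rw [hnot c List.mem_cons_self hc, zero_add, List.countP_cons_of_neg (by simpa)]
      exact ih hnot' fun a₁ s a₂ ha hs ↦ by
        rw [hsplit (c :: a₁) s a₂ (by rw [ha, List.cons_append]) hs,
          List.countP_cons_of_neg (by simpa)]

theorem sum_map_ite_eq_countP_nsmul {D M : Type*} [AddCommMonoid M] (m : Multiset D)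
    (p : D → Prop) [DecidablePred p] (y : M) :
    (m.map fun x ↦ if p x then y else 0).sum = m.countP p • y := by
  induction m using Multiset.induction with
  | empty => simp
  | cons x m ih => by_cases hx : p x <;> simp [hx, ih, succ_nsmul']

theorem countP_letters {D : Type*} (p : D → Prop) [DecidablePred p] (L : Multiset (Cycle D)) :
    (letters L).countP p = (L.map fun c ↦ c.toMultiset.countP p).sum := by
  simp only [letters, Multiset.countP_eq_card_filter, Multiset.filter_bind, Multiset.card_bind]
  rfl

section Weight

open Equiv PowerSeries

variable {D R : Type*} [DecidableEq D] [CommSemiring R] {B : ℕ → R⟦X⟧}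
  {L : Multiset (Cycle D)} {S : Finset D} {r s : D} {a b : List D}

/-- The product over the words in `L` of `B l`, where `l` is the number of letters in `S`. -/
noncomputable def wordsWeight (B : ℕ → R⟦X⟧) (S : Finset D) (L : Multiset (Cycle D)) : R⟦X⟧ :=
  (L.map fun c ↦ B (c.toMultiset.countP (· ∈ S))).prod

theorem wordsWeight_cons (B : ℕ → R⟦X⟧) (S : Finset D) (c : Cycle D) (L : Multiset (Cycle D)) :
    wordsWeight B S (c ::ₘ L) = B (c.toMultiset.countP (· ∈ S)) * wordsWeight B S L := by
  simp [wordsWeight]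

theorem countP_mem_sdiff_pair {m : Multiset D} (hr : r ∉ m) (hs : s ∉ m) :
    m.countP (· ∈ S \ {r, s}) = m.countP (· ∈ S) :=
  Multiset.countP_congr rfl fun x hx ↦ by
    have : x ≠ r ∧ x ≠ s := ⟨ne_of_mem_of_not_mem hx hr, ne_of_mem_of_not_mem hx hs⟩
    simp [this]

theorem wordsWeight_sdiff_pair (hr : r ∉ letters L) (hs : s ∉ letters L) :
    wordsWeight B (S \ {r, s}) L = wordsWeight B S L := by
  refine congrArg Multiset.prod (Multiset.map_congr rfl fun c hc ↦ ?_)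
  rw [countP_mem_sdiff_pair (fun h ↦ hr ?_) fun h ↦ hs ?_] <;>
  exact Multiset.mem_bind.mpr ⟨c, hc, h⟩

theorem wordsWeight_cut (h : (letters (↑(r :: (a ++ s :: b)) ::ₘ L)).Nodup) :
    wordsWeight B (S \ {r, s}) (↑(s :: a) ::ₘ ↑(r :: b) ::ₘ L) =
      B (a.countP (· ∈ S)) * B (b.countP (· ∈ S)) * wordsWeight B S L := by
  simp only [letters_cons, Cycle.coe_toMultiset, Multiset.nodup_add, Multiset.coe_nodup,
    Multiset.disjoint_left, Multiset.mem_coe] at h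
  obtain ⟨hword, -, hL⟩ := h
  have ha : (a : Multiset D).countP (· ∈ S \ {r, s}) = a.countP (· ∈ S) :=
    countP_mem_sdiff_pair (by grind [Multiset.mem_coe]) (by grind [Multiset.mem_coe])
  have hb : (b : Multiset D).countP (· ∈ S \ {r, s}) = b.countP (· ∈ S) :=
    countP_mem_sdiff_pair (by grind [Multiset.mem_coe]) (by grind [Multiset.mem_coe])
  rw [wordsWeight_cons, wordsWeight_cons, wordsWeight_sdiff_pair (hL (by simp)) (hL (by simp)),
    Cycle.coe_toMultiset, Cycle.coe_toMultiset, ← Multiset.cons_coe, ← Multiset.cons_coe,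
    Multiset.countP_cons_of_neg _ (by simp), Multiset.countP_cons_of_neg _ (by simp), ha, hb,
    mul_assoc]

theorem wordsWeight_join (h : (letters (↑(r :: a) ::ₘ ↑(s :: b) ::ₘ L)).Nodup) :
    wordsWeight B (S \ {r, s}) (↑(r :: (b ++ s :: a)) ::ₘ L) =
      B (a.countP (· ∈ S) + b.countP (· ∈ S)) * wordsWeight B S L := by
  simp only [letters_cons, Cycle.coe_toMultiset, Multiset.nodup_add, Multiset.coe_nodup,
    Multiset.disjoint_left, Multiset.mem_coe, Multiset.mem_add] at h
  obtain ⟨hra, ⟨hsb, -, hsL⟩, hrL⟩ := h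
  have ha : (a : Multiset D).countP (· ∈ S \ {r, s}) = a.countP (· ∈ S) :=
    countP_mem_sdiff_pair (by grind [Multiset.mem_coe]) (by grind [Multiset.mem_coe])
  have hb : (b : Multiset D).countP (· ∈ S \ {r, s}) = b.countP (· ∈ S) :=
    countP_mem_sdiff_pair (by grind [Multiset.mem_coe]) (by grind [Multiset.mem_coe])
  rw [wordsWeight_cons, wordsWeight_sdiff_pair (fun hL ↦ hrL (by simp) (.inr hL))
    (hsL (by simp)), ← ha, ← hb]
  simp [add_comm]

theorem wordsWeight_of_disjoint (hB : B 0 = 1) (hS : ∀ x ∈ letters L, x ∉ S) :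
    wordsWeight B S L = 1 := by
  refine Multiset.prod_eq_one fun y hy ↦ ?_
  obtain ⟨c, hc, rfl⟩ := Multiset.mem_map.mp hy
  rw [Multiset.countP_eq_zero.mpr fun x hx ↦ hS x (Multiset.mem_bind.mpr ⟨c, hc, hx⟩), hB]

end Weight

section GluingFormula

open Equiv PowerSeries

variable {D R : Type*} [Fintype D] [DecidableEq D] [CommSemiring R] {φ : Perm D} {B : ℕ → R⟦X⟧}
  {k : ℕ} {L U : Multiset (Cycle D)} {S : Finset D} {r : D} {a : List D}

/-- The formula for the number of planar gluings of the points of `S` in terms of the series `B`,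
for unmarked faces with `k + 1` points in `S` each. There are `u!` ways to distribute the `u`
unmarked faces, and `k + 1` ways to turn each of them. -/
def PlanarGluingFormula (k : ℕ) (B : ℕ → R⟦X⟧) (S : Finset D) : Prop :=
  ∀ ⦃φ : Perm D⦄ ⦃L U : Multiset (Cycle D)⦄, IsCycleDecomposition φ (L + U) →
    (∀ c ∈ U, c.toMultiset.countP (· ∈ S) = k + 1) →
    (planarGluingCount φ L U.card S : R) =
      (k + 1) ^ U.card * U.card.factorial * coeff U.card (wordsWeight B S L)

theorem sum_planarGluingCountAt_cut (ih : ∀ T ⊂ S, PlanarGluingFormula k B T)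
    (hφ : IsCycleDecomposition φ (↑(r :: a) ::ₘ L + U))
    (hU : ∀ c ∈ U, c.toMultiset.countP (· ∈ S) = k + 1) (hr : r ∈ S) :
    ((a.map (planarGluingCountAt φ (↑(r :: a) ::ₘ L) U.card S r)).sum : R) =
      (k + 1) ^ U.card * U.card.factorial * coeff U.card ((∑ i ∈ Finset.range (a.countP (· ∈ S)),
        B i * B (a.countP (· ∈ S) - 1 - i)) * wordsWeight B S L) := by
  rw [Finset.sum_mul, map_sum, Finset.mul_sum, Nat.cast_list_sum, List.map_map]
  refine sum_map_eq_sum_range_countP (f := fun i j ↦ (k + 1) ^ U.card * U.card.factorial *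
    coeff U.card (B i * B j * wordsWeight B S L)) (fun s _ hs ↦ ?_) fun a₁ s a₂ ha hs ↦ ?_
  · simp [planarGluingCountAt_of_notMem hr hs]
  subst ha
  have hnodup := hφ.nodup
  rw [letters_add, Multiset.nodup_add] at hnodup
  obtain ⟨hword, -, hdisj⟩ := hnodup
  have hne : r ≠ s := by
    rintro rfl
    simp [Multiset.nodup_add] at hword
  have hrU : r ∉ letters U := Multiset.disjoint_left.mp hdisj (by simp)
  have hsU : s ∉ letters U := Multiset.disjoint_left.mp hdisj (by simp)
  rw [Function.comp_apply, planarGluingCountAt_cut hr hs hne, ← wordsWeight_cut hword]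
  rw [Multiset.cons_add, isCycleDecomposition_cut_iff] at hφ
  refine ih _ (sdiff_pair_ssubset hr) (by simpa only [Multiset.cons_add] using hφ) fun c hc ↦ ?_
  rw [← hU c hc, countP_mem_sdiff_pair]
  · exact fun h ↦ hrU (Multiset.mem_bind.mpr ⟨c, hc, h⟩)
  · exact fun h ↦ hsU (Multiset.mem_bind.mpr ⟨c, hc, h⟩)

theorem planarGluingCountAt_join_eq (ih : ∀ T ⊂ S, PlanarGluingFormula k B T) {u : ℕ} {s : D}
    (hφ : IsCycleDecomposition φ (↑(r :: a) ::ₘ L + U))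
    (hU : ∀ c ∈ U, c.toMultiset.countP (· ∈ S) = k + 1) (hr : r ∈ S) (hu : U.card = u + 1)
    (hs : s ∈ S) (hsU : s ∈ letters U) :
    (planarGluingCountAt φ (↑(r :: a) ::ₘ L) (u + 1) S r s : R) =
      (k + 1) ^ u * u.factorial * coeff u (B (a.countP (· ∈ S) + k) * wordsWeight B S L) := by
  obtain ⟨b, U, rfl⟩ := exists_eq_cons_of_mem_letters hsU
  obtain rfl : U.card = u := by simpa using hu
  have hb : b.countP (· ∈ S) = k := by simpa [hs] using hU ↑(s :: b) (by simp)
  have hnodup := hφ.nodup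
  rw [Multiset.cons_add, Multiset.add_cons, ← Multiset.cons_add, ← Multiset.cons_add, letters_add,
    Multiset.nodup_add] at hnodup
  obtain ⟨hwords, -, hdisj⟩ := hnodup
  have hne : r ≠ s := by
    rintro rfl
    simp [Multiset.nodup_add] at hwords
  have hrU : r ∉ letters U := Multiset.disjoint_left.mp hdisj (by simp)
  have hsU : s ∉ letters U := Multiset.disjoint_left.mp hdisj (by simp)
  have hweight := wordsWeight_join (B := B) (S := S) hwords
  rw [hb] at hweight
  rw [planarGluingCountAt_join hφ hr hs hne, ← hweight]
  rw [Multiset.cons_add, Multiset.add_cons] at hφ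
  refine ih _ (sdiff_pair_ssubset hr) (by simpa only [Multiset.cons_add] using hφ.join)
    fun c hc ↦ ?_
  rw [← hU c (by simp [hc]), countP_mem_sdiff_pair]
  · exact fun h ↦ hrU (Multiset.mem_bind.mpr ⟨c, hc, h⟩)
  · exact fun h ↦ hsU (Multiset.mem_bind.mpr ⟨c, hc, h⟩)

theorem sum_planarGluingCountAt_join (ih : ∀ T ⊂ S, PlanarGluingFormula k B T)
    (hφ : IsCycleDecomposition φ (↑(r :: a) ::ₘ L + U))
    (hU : ∀ c ∈ U, c.toMultiset.countP (· ∈ S) = k + 1) (hr : r ∈ S) :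
    (((letters U).map (planarGluingCountAt φ (↑(r :: a) ::ₘ L) U.card S r)).sum : R) =
      (k + 1) ^ U.card * U.card.factorial *
        coeff U.card (X * (B (a.countP (· ∈ S) + k) * wordsWeight B S L)) := by
  obtain hU0 | ⟨u, hu⟩ : U.card = 0 ∨ ∃ u, U.card = u + 1 := by
    cases U.card <;> simp
  · rw [hU0, Multiset.card_eq_zero.mp hU0]
    simp
  set K : R :=
    (k + 1) ^ u * u.factorial * coeff u (B (a.countP (· ∈ S) + k) * wordsWeight B S L) with hK
  have hvalue : ∀ s ∈ letters U, (planarGluingCountAt φ (↑(r :: a) ::ₘ L) (u + 1) S r s : R) =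
      if s ∈ S then K else 0 := fun s hsU ↦ by
    split_ifs with hs
    · exact planarGluingCountAt_join_eq ih hφ hU hr hu hs hsU
    · rw [planarGluingCountAt_of_notMem hr hs, Nat.cast_zero]
  have hlive : (letters U).countP (· ∈ S) = U.card * (k + 1) := by
    rw [countP_letters, Multiset.map_congr rfl hU, Multiset.map_const', Multiset.sum_replicate,
      smul_eq_mul]
  rw [Nat.cast_multiset_sum, Multiset.map_map, hu]
  calc ((letters U).map fun s ↦
        (planarGluingCountAt φ (↑(r :: a) ::ₘ L) (u + 1) S r s : R)).sum
    _ = (U.card * (k + 1)) • K := by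
      rw [← hlive, ← sum_map_ite_eq_countP_nsmul, Multiset.map_congr rfl hvalue]
    _ = _ := by
      rw [hu, coeff_succ_X_mul, Nat.factorial_succ, nsmul_eq_mul, hK]
      push_cast
      ring

theorem planarGluingFormula (hB : TutteRecursion k B) (S : Finset D) :
    PlanarGluingFormula k B S := by
  induction S using Finset.strongInduction with | H S ih
  intro φ L U hφ hU
  by_cases hlive : ∀ x ∈ letters L, x ∉ S
  · rw [planarGluingCount_of_disjoint hφ hlive, wordsWeight_of_disjoint hB.zero hlive, coeff_one]
    split_ifs with hu <;> simp [hu]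
  push Not at hlive
  obtain ⟨r, hrL, hrS⟩ := hlive
  obtain ⟨a, L, rfl⟩ := exists_eq_cons_of_mem_letters hrL
  have hcount : (↑(r :: a) : Cycle D).toMultiset.countP (· ∈ S) = a.countP (· ∈ S) + 1 := by
    simp [hrS]
  rw [planarGluingCount_eq_sum_add_sum hφ hrS, Nat.cast_add,
    sum_planarGluingCountAt_cut ih hφ hU hrS, sum_planarGluingCountAt_join ih hφ hU hrS,
    wordsWeight_cons, hcount, hB.succ, add_mul, map_add, mul_add, mul_assoc X]

end GluingFormula

/-! ### Permutations with orbits of the same size -/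

section UniformOrbits

open Equiv

variable {D : Type*} {φ : Perm D} {m n : ℕ}

/-- All orbits of `φ` have `m` elements. For the face permutation of a combinatorial map: all faces
have degree `m`. -/
def HasOrbitsOfCard (m : ℕ) (φ : Perm D) : Prop :=
  ∀ x : D, Nat.card (MulAction.orbit (Subgroup.zpowers φ) x) = m

theorem HasOrbitsOfCard.permOrbits_mul [Fintype D] (h : HasOrbitsOfCard m φ) :
    permOrbits φ * m = Fintype.card D := by
  have := Fintype.ofFinite (MulAction.orbitRel.Quotient (Subgroup.zpowers φ) D)
  rw [← Nat.card_eq_fintype_card,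
    Nat.card_congr (MulAction.selfEquivSigmaOrbits (Subgroup.zpowers φ) D), Nat.card_sigma,
    Finset.sum_congr rfl fun q _ ↦ h q.out, Finset.sum_const, Finset.card_univ,
    ← Nat.card_eq_fintype_card, smul_eq_mul]
  rfl

theorem permOrbits_conj [Fintype D] (ρ φ : Perm D) : permOrbits (ρ * φ * ρ⁻¹) = permOrbits φ := by
  rw [permOrbits_eq_card_quotient_sameCycle, permOrbits_eq_card_quotient_sameCycle]
  refine Nat.card_congr (Quotient.congr ρ⁻¹ fun x y ↦ ?_)
  exact Perm.sameCycle_conj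

theorem HasOrbitsOfCard.conj (h : HasOrbitsOfCard m φ) (ρ : Perm D) :
    HasOrbitsOfCard m (ρ * φ * ρ⁻¹) := fun x ↦ by
  rw [← h (ρ⁻¹ x)]
  refine Nat.card_congr (ρ⁻¹.subtypeEquiv fun y ↦ ?_)
  rw [mem_orbit_zpowers_iff_sameCycle, mem_orbit_zpowers_iff_sameCycle, Perm.sameCycle_conj]

theorem IsInvolutionOn.hasOrbitsOfCard_two [Fintype D] (h : IsInvolutionOn Finset.univ φ) :
    HasOrbitsOfCard 2 φ := fun x ↦ by
  have : Fact (Nat.Prime 2) := ⟨Nat.prime_two⟩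
  have hperiod : Function.minimalPeriod φ x = 2 :=
    Function.minimalPeriod_eq_prime (h.involutive x) ((h.mem_iff x).mp (Finset.mem_univ x))
  have := Fintype.ofFinite (MulAction.orbit (Subgroup.zpowers φ) x)
  rw [← hperiod, Nat.card_eq_fintype_card]
  exact (MulAction.minimalPeriod_eq_card (a := φ) (b := x)).symm

variable [Fintype D]

section CycleType

variable [DecidableEq D]

theorem mem_cycleType_iff_exists_card_orbit {l : ℕ} :
    l ∈ φ.cycleType ↔
      ∃ x, φ x ≠ x ∧ Nat.card (MulAction.orbit (Subgroup.zpowers φ) x) = l := by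
  have card_support {x : D} (hx : φ x ≠ x) :
      (φ.cycleOf x).support.card = Nat.card (MulAction.orbit (Subgroup.zpowers φ) x) := by
    rw [← Nat.card_eq_finsetCard]
    refine Nat.card_congr (subtypeEquivRight fun y ↦ ?_)
    rw [Perm.mem_support_cycleOf_iff' hx, mem_orbit_zpowers_iff_sameCycle]
  simp only [Perm.cycleType_def, Multiset.mem_map, Finset.mem_val, Function.comp_apply]
  constructor
  · rintro ⟨c, hc, rfl⟩
    obtain ⟨x, hx⟩ := (Perm.mem_cycleFactorsFinset_iff.mp hc).1.nonempty_support
    have hφx : φ x ≠ x := Perm.mem_support.mp (Perm.mem_cycleFactorsFinset_support_le hc hx)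
    exact ⟨x, hφx, by rw [Perm.cycle_is_cycleOf hx hc, card_support hφx]⟩
  · rintro ⟨x, hx, rfl⟩
    exact ⟨φ.cycleOf x, Perm.cycleOf_mem_cycleFactorsFinset_iff.mpr (Perm.mem_support.mpr hx),
      card_support hx⟩

theorem hasOrbitsOfCard_iff_support_eq_univ (hm : m ≠ 1) :
    HasOrbitsOfCard m φ ↔ φ.support = Finset.univ ∧ ∀ l ∈ φ.cycleType, l = m := by
  simp only [Finset.eq_univ_iff_forall, Perm.mem_support, mem_cycleType_iff_exists_card_orbit]
  constructor
  · refine fun h ↦ ⟨fun x hx ↦ hm ?_, fun l ⟨x, _, hl⟩ ↦ hl ▸ h x⟩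
    rw [← h x, Nat.card_eq_one_iff_exists]
    exact ⟨⟨x, MulAction.mem_orbit_self x⟩, fun ⟨y, hy⟩ ↦
      Subtype.ext ((mem_orbit_zpowers_iff_sameCycle.mp hy).eq_of_left hx).symm⟩
  · exact fun ⟨hmoved, hcard⟩ x ↦ hcard _ ⟨x, hmoved x, rfl⟩

theorem hasOrbitsOfCard_iff_cycleType_eq (hm : 2 ≤ m) (hD : Fintype.card D = m * n) :
    HasOrbitsOfCard m φ ↔ φ.cycleType = Multiset.replicate n m := by
  have hsum := φ.sum_cycleType
  rw [hasOrbitsOfCard_iff_support_eq_univ (by lia), ← Finset.card_eq_iff_eq_univ, hD, ← hsum,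
    Multiset.eq_replicate, and_comm, and_comm (b := ∀ l ∈ φ.cycleType, l = m)]
  refine and_congr_right fun h ↦ ?_
  rw [Multiset.eq_replicate_card.mpr h, Multiset.sum_replicate, Multiset.card_replicate,
    smul_eq_mul, mul_comm, Nat.mul_right_inj (by lia)]

end CycleType

theorem card_hasOrbitsOfCard_mul (hm : 2 ≤ m) (hn : n ≠ 0) (hD : Fintype.card D = m * n) :
    Nat.card {φ : Perm D // HasOrbitsOfCard m φ} * (m ^ n * n.factorial) = (m * n).factorial := by
  classical
  have hcount := Perm.card_of_cycleType_mul_eq D (Multiset.replicate n m)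
  rw [if_pos ⟨by simp [hD, mul_comm], fun l hl ↦ (Multiset.eq_of_mem_replicate hl).symm ▸ hm⟩,
    ← Fintype.card_subtype, ← Nat.card_eq_fintype_card,
    ← Nat.card_congr (subtypeEquivRight fun φ ↦ hasOrbitsOfCard_iff_cycleType_eq hm hD), hD]
    at hcount
  simpa [Multiset.toFinset_replicate, hn, mul_comm n m] using hcount

end UniformOrbits

/-! ### Labelled rooted maps -/

section RootedMaps

open Equiv PowerSeries

variable {D : Type*} [Fintype D] {φ α : Perm D} {r : D} {a : List D} {U : Multiset (Cycle D)}
  {k n : ℕ} {R : Type*} [CommSemiring R] {B : ℕ → R⟦X⟧}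

/-- `α` is the edge involution of a connected planar map with face permutation `φ`, hence with
vertex permutation `φ * α`; connectedness is expressed from the root dart `r`. -/
structure IsRootedPlanarMap (φ : Perm D) (r : D) (α : Perm D) : Prop where
  involution : IsInvolutionOn Finset.univ α
  connected : ∀ x, x ∈ MulAction.orbit (Subgroup.closure {φ, α} : Subgroup (Perm D)) r
  euler : permOrbits (φ * α) + permOrbits φ = permOrbits α + 2

theorem IsCycleDecomposition.isPlanarGluing_singleton_iff
    (hφ : IsCycleDecomposition φ (↑(r :: a) ::ₘ U)) :
    IsPlanarGluing φ {(↑(r :: a) : Cycle D)} U.card Finset.univ α ↔ IsRootedPlanarMap φ r α := by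
  have hface := hφ.permOrbits_eq_card
  constructor
  · intro h
    have hedge := h.involution.hasOrbitsOfCard_two.permOrbits_mul
    have heuler := h.euler
    refine ⟨h.involution, hφ.reaches_singleton_iff.mp h.reaches, ?_⟩
    simp only [Multiset.card_cons, Multiset.card_singleton, Finset.card_univ] at hface heuler
    lia
  · intro h
    have hedge := h.involution.hasOrbitsOfCard_two.permOrbits_mul
    have heuler := h.euler
    refine ⟨⟨h.involution, hφ.reaches_singleton_iff.mpr h.connected⟩, ?_⟩
    simp only [Multiset.card_cons, Multiset.card_singleton, Finset.card_univ] at hface ⊢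
    lia

theorem HasOrbitsOfCard.card_isRootedPlanarMap (hB : TutteRecursion k B)
    (hφ : HasOrbitsOfCard (k + 1) φ) (hD : Fintype.card D = (k + 1) * (n + 1)) (r : D) :
    (Nat.card {α // IsRootedPlanarMap φ r α} : R) =
      (k + 1) ^ n * n.factorial * coeff n (B (k + 1)) := by
  classical
  obtain ⟨L, hL⟩ := exists_isCycleDecomposition φ
  obtain ⟨a, U, rfl⟩ := exists_eq_cons_of_mem_letters (hL.mem_letters r)
  have hdegree (c) (hc : c ∈ ↑(r :: a) ::ₘ U) :
      c.toMultiset.countP (· ∈ (Finset.univ : Finset D)) = k + 1 := by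
    obtain ⟨x, hx⟩ := hL.exists_mem hc
    rw [Multiset.countP_eq_card.mpr fun _ _ ↦ Finset.mem_univ _, Cycle.card_toMultiset,
      ← hL.card_orbit_eq_length hc hx, hφ x]
  have hU : U.card = n := by
    have := hφ.permOrbits_mul
    rw [hL.permOrbits_eq_card, hD, mul_comm, Multiset.card_cons] at this
    simpa using this
  have hcount := planarGluingFormula hB Finset.univ (L := {(↑(r :: a) : Cycle D)}) (U := U) hL
    fun c hc ↦ hdegree c (Multiset.mem_cons_of_mem hc)
  have hweight : wordsWeight B Finset.univ {(↑(r :: a) : Cycle D)} = B (k + 1) := by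
    rw [wordsWeight, Multiset.map_singleton, Multiset.prod_singleton, hdegree _ (by simp)]
  rw [← Nat.card_congr (subtypeEquivRight fun α ↦ hL.isPlanarGluing_singleton_iff (α := α)), ← hU,
    ← hweight, ← hcount, planarGluingCount]

/-- Rooted planar maps with darts labelled by `D` and all faces of degree `m`. -/
abbrev LabelledMap (m : ℕ) (D : Type*) [Fintype D] : Type _ :=
  Σ q : {φ : Perm D // HasOrbitsOfCard m φ} × D, {α // IsRootedPlanarMap q.1.1 q.2 α}

theorem card_labelledMap (hB : TutteRecursion k B) (hk : k ≠ 0)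
    (hD : Fintype.card D = (k + 1) * (n + 1)) :
    (Nat.card (LabelledMap (k + 1) D) : R) =
      ((k + 1) * (n + 1)).factorial * coeff n (B (k + 1)) := by
  have := Fintype.ofFinite {φ : Perm D // HasOrbitsOfCard (k + 1) φ}
  have hfaces := card_hasOrbitsOfCard_mul (by lia) (Nat.add_one_ne_zero n) hD
  rw [Nat.card_sigma, Nat.cast_sum,
    Finset.sum_congr rfl fun q _ ↦ q.1.2.card_isRootedPlanarMap hB hD q.2, Finset.sum_const,
    Finset.card_univ, Fintype.card_prod, hD, ← hfaces, Nat.card_eq_fintype_card]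
  push_cast [Nat.factorial_succ, nsmul_eq_mul]
  ring

end RootedMaps

/-! ### Relabelling quadrangulations -/

section Relabelling

open Equiv

theorem closure_pair_mul_right {G : Type*} [Group G] (g h : G) :
    Subgroup.closure {g * h, h} = Subgroup.closure {g, h} := by
  have hh : h ∈ Subgroup.closure {g * h, h} := Subgroup.subset_closure (by simp)
  have hgh : g * h ∈ Subgroup.closure {g * h, h} := Subgroup.subset_closure (by simp)
  have hg' : g ∈ Subgroup.closure {g, h} := Subgroup.subset_closure (by simp)
  have hh' : h ∈ Subgroup.closure {g, h} := Subgroup.subset_closure (by simp)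
  refine le_antisymm ?_ ?_ <;> rw [Subgroup.closure_le, Set.pair_subset_iff]
  · exact ⟨mul_mem hg' hh', hh'⟩
  · exact ⟨by simpa using mul_mem hgh (inv_mem hh), hh⟩

theorem closure_conj_pair {G : Type*} [Group G] (g h c : G) :
    Subgroup.closure {c * g * c⁻¹, c * h * c⁻¹} =
      (Subgroup.closure {g, h}).map (MulAut.conj c).toMonoidHom := by
  rw [MonoidHom.map_closure, Set.image_pair]
  rfl

namespace Quadrangulation

variable {n k : ℕ}

attribute [ext] Quadrangulation

theorem α_mul_α (Q : Quadrangulation n) : Q.α * Q.α = 1 := Equiv.ext Q.hinv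

/-- A quadrangulation consists of its face permutation `σ * α`, its root and its edge involution
`α`. -/
def equivLabelledMap (n : ℕ) : Quadrangulation n ≃ LabelledMap 4 (Fin (4 * n)) where
  toFun Q := ⟨⟨⟨Q.σ * Q.α, Q.hquad⟩, Q.root⟩, Q.α,
    ⟨Q.hinv, fun x ↦ by simp [Q.hfix x]⟩, closure_pair_mul_right Q.σ Q.α ▸ Q.hconn,
    by rw [mul_assoc, Q.α_mul_α, mul_one, Q.heuler]⟩
  invFun M :=
    have hα : M.1.1.1 * M.2.1 * M.2.1 = M.1.1.1 :=
      Equiv.ext fun x ↦ congrArg M.1.1.1 (M.2.2.involution.involutive x)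
    { σ := M.1.1.1 * M.2.1
      α := M.2.1
      root := M.1.2
      hinv := M.2.2.involution.involutive
      hfix x := (M.2.2.involution.mem_iff x).mp (Finset.mem_univ x)
      hconn := closure_pair_mul_right M.1.1.1 M.2.1 ▸ M.2.2.connected
      heuler := hα.symm ▸ M.2.2.euler
      hquad := hα.symm ▸ M.1.1.2 }
  left_inv Q := by
    ext1
    · change Q.σ * Q.α * Q.α = Q.σ
      rw [mul_assoc, Q.α_mul_α, mul_one]
    · rfl
    · rfl
  right_inv M := by
    refine Sigma.subtype_ext (Prod.ext (Subtype.ext ?_) rfl) rfl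
    exact Equiv.ext fun x ↦ congrArg M.1.1.1 (M.2.2.involution.involutive x)

theorem card_eq {R : Type*} [CommSemiring R] {B : ℕ → PowerSeries R} (hB : TutteRecursion 3 B) :
    (Nat.card (Quadrangulation (k + 1)) : R) =
      (4 * (k + 1)).factorial * PowerSeries.coeff k (B 4) := by
  rw [Nat.card_congr (equivLabelledMap (k + 1))]
  exact card_labelledMap hB three_ne_zero (Fintype.card_fin _)

/-- The quadrangulation obtained by renaming each dart `d` to `ρ d`. -/
def relabel (ρ : Perm (Fin (4 * n))) (Q : Quadrangulation n) : Quadrangulation n where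
  σ := ρ * Q.σ * ρ⁻¹
  α := ρ * Q.α * ρ⁻¹
  root := ρ Q.root
  hinv d := by simp [Q.hinv]
  hfix d h := Q.hfix (ρ⁻¹ d) (Perm.eq_inv_iff_eq.mpr h)
  hconn d := by
    obtain ⟨⟨g, hg⟩, hd⟩ := Q.hconn (ρ⁻¹ d)
    refine ⟨⟨ρ * g * ρ⁻¹, ?_⟩, ?_⟩
    · rw [closure_conj_pair]
      exact Subgroup.mem_map_of_mem (MulAut.conj ρ).toMonoidHom hg
    · change ρ (g (ρ⁻¹ (ρ Q.root))) = d
      rw [Perm.inv_def, symm_apply_apply]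
      exact Perm.eq_inv_iff_eq.mp hd
  heuler := by simpa only [conj_mul, permOrbits_conj] using Q.heuler
  hquad d := by
    rw [conj_mul]
    exact HasOrbitsOfCard.conj Q.hquad ρ d

instance : SMul (Perm (Fin (4 * n))) (Quadrangulation n) := ⟨relabel⟩

theorem smul_σ (ρ : Perm (Fin (4 * n))) (Q : Quadrangulation n) : (ρ • Q).σ = ρ * Q.σ * ρ⁻¹ := rfl

theorem smul_α (ρ : Perm (Fin (4 * n))) (Q : Quadrangulation n) : (ρ • Q).α = ρ * Q.α * ρ⁻¹ := rfl

theorem smul_root (ρ : Perm (Fin (4 * n))) (Q : Quadrangulation n) : (ρ • Q).root = ρ Q.root := rfl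

instance : MulAction (Perm (Fin (4 * n))) (Quadrangulation n) where
  one_smul Q := Quadrangulation.ext (by simp [smul_σ]) (by simp [smul_α]) rfl
  mul_smul ρ τ Q :=
    Quadrangulation.ext (by simp [smul_σ, mul_assoc]) (by simp [smul_α, mul_assoc]) rfl

theorem smul_eq_iff {ρ : Perm (Fin (4 * n))} {Q Q' : Quadrangulation n} :
    ρ • Q = Q' ↔ (∀ d, ρ (Q.σ d) = Q'.σ (ρ d)) ∧ (∀ d, ρ (Q.α d) = Q'.α (ρ d)) ∧
      ρ Q.root = Q'.root := by
  rw [Quadrangulation.ext_iff, smul_σ, smul_α, smul_root, mul_inv_eq_iff_eq_mul,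
    mul_inv_eq_iff_eq_mul, Equiv.ext_iff, Equiv.ext_iff]
  rfl

theorem stabilizer_eq_bot (Q : Quadrangulation n) :
    MulAction.stabilizer (Perm (Fin (4 * n))) Q = ⊥ := by
  refine (Subgroup.eq_bot_iff_forall _).mpr fun ρ hρ ↦ Equiv.ext fun d ↦ ?_
  obtain ⟨hσ, hα, hroot⟩ := smul_eq_iff.mp hρ
  have hcomm : Subgroup.closure {Q.σ, Q.α} ≤ Subgroup.centralizer {ρ} := by
    rw [Subgroup.closure_le, Set.pair_subset_iff]
    exact ⟨Subgroup.mem_centralizer_singleton_iff.mpr (Equiv.ext hσ).symm,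
      Subgroup.mem_centralizer_singleton_iff.mpr (Equiv.ext hα).symm⟩
  obtain ⟨⟨g, hg⟩, rfl⟩ := Q.hconn d
  calc ρ (g Q.root) = g (ρ Q.root) :=
        congrArg (· Q.root) (Subgroup.mem_centralizer_singleton_iff.mp (hcomm hg)).symm
    _ = g Q.root := by rw [hroot]

theorem card_eq_card_quot_mul (n : ℕ) :
    Nat.card (Quadrangulation n) = Nat.card (Quot (QuadIso (n := n))) * (4 * n).factorial := by
  have hquot : Quot (QuadIso (n := n)) ≃
      MulAction.orbitRel.Quotient (Perm (Fin (4 * n))) (Quadrangulation n) :=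
    Quot.congrRight fun Q Q' ↦ by
      change _ ↔ Q ∈ MulAction.orbit _ Q'
      rw [MulAction.mem_orbit_symm]
      exact exists_congr fun ρ ↦ smul_eq_iff.symm
  rw [Nat.card_congr (MulAction.selfEquivOrbitsQuotientProd stabilizer_eq_bot), Nat.card_prod,
    Nat.card_congr hquot, Nat.card_perm, Nat.card_fin]

end Quadrangulation

end Relabelling

/-- Tutte's formula: the number of rooted quadrangulations with `n` faces (up to
isomorphism) equals `(2/(n+2))·(3^n/(n+1))·binom(2n,n)`. -/
theorem tutte_formula (n : ℕ) (hn : 1 ≤ n) :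
    (n + 2) * ((n + 1) * Nat.card (Quot (QuadIso (n := n)))) =
      2 * (3 ^ n * Nat.choose (2 * n) n) := by
  obtain ⟨k, rfl⟩ := Nat.exists_eq_add_of_le' hn
  have hcard : (Nat.card (Quot (QuadIso (n := k + 1))) : ℚ) =
      PowerSeries.coeff k (diskSeries 4) := by
    have hlabelled := Quadrangulation.card_eq (k := k) tutteRecursion_diskSeries
    rw [Quadrangulation.card_eq_card_quot_mul, Nat.cast_mul, mul_comm] at hlabelled
    exact mul_left_cancel₀ (Nat.cast_ne_zero.mpr (Nat.factorial_ne_zero _)) hlabelled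
  have hcoeff := coeff_diskSeries_four k
  rw [← hcard] at hcoeff
  exact_mod_cast hcoeff
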